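/- Monotonicity of reach under changing front-car acceleration: if the front car has position x_l, velocity v_l ≥ 0 and uses any acceleration a ≥ B_max during time t ≥ 0 (velocity clamped below at 0), then its position at time t is at least the position it would have had braking at B_max for time t (also clamped). Hence the worst case for a rear car is the front car braking at maximum force B_max. -/

import Mathlib

/-- Position under constant acceleration `c`, velocity clamped below at 0. -/
noncomputable def clampPos (x v c t : ℝ) : ℝ :=
  if 0 ≤ v + c * t then x + v * t + (c / 2) * t ^ 2 else x - v ^ 2 / (2 * c)

/-! For `0 ≤ v`, a car with velocity clamped at `0` follows the parabola
`s ↦ x + v * s + (c / 2) * s ^ 2` until it would turn back and then stays at the vertex, so its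
position at time `t` is the maximum of the parabola over `[0, t]`. At each fixed `s` the parabola
is monotone in `c`, hence so is the maximum. -/

open Set

/-- Position at time `s` under constant acceleration `c`, without clamping: past the stopping time
a braking car is taken to roll backwards. -/
noncomputable def freePos (x v c s : ℝ) : ℝ :=
  x + v * s + (c / 2) * s ^ 2

section

variable {x v c s t : ℝ}

theorem monotone_freePos_acceleration (x v s : ℝ) : Monotone fun c ↦ freePos x v c s := by
  intro c d hcd
  simp only [freePos]
  gcongr

theorem freePos_sub_freePos (x v c s t : ℝ) :
    freePos x v c t - freePos x v c s = (t - s) * (((v + c * s) + (v + c * t)) / 2) := by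
  unfold freePos
  ring

theorem velocity_nonneg_of_mem_Icc (hv : 0 ≤ v) (hvt : 0 ≤ v + c * t) (hs : s ∈ Icc 0 t) :
    0 ≤ v + c * s := by
  rcases le_total 0 c with hc | hc
  · exact add_nonneg hv (mul_nonneg hc hs.1)
  · exact hvt.trans (add_le_add_right (mul_le_mul_of_nonpos_left hs.2 hc) v)

theorem freePos_le_freePos_of_velocity_nonneg (hst : s ≤ t) (hvs : 0 ≤ v + c * s)
    (hvt : 0 ≤ v + c * t) : freePos x v c s ≤ freePos x v c t := by
  rw [← sub_nonneg, freePos_sub_freePos]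
  exact mul_nonneg (sub_nonneg.2 hst) (div_nonneg (add_nonneg hvs hvt) zero_le_two)

theorem freePos_eq_vertex_form (hc : c ≠ 0) :
    freePos x v c s = x - v ^ 2 / (2 * c) + c / 2 * (s + v / c) ^ 2 := by
  unfold freePos
  field_simp
  ring

theorem freePos_stoppingTime (hc : c ≠ 0) :
    freePos x v c (-(v / c)) = x - v ^ 2 / (2 * c) := by
  simp [freePos_eq_vertex_form hc]

theorem freePos_le_of_acceleration_neg (hc : c < 0) :
    freePos x v c s ≤ x - v ^ 2 / (2 * c) := by
  rw [freePos_eq_vertex_form hc.ne]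
  have half_nonpos : c / 2 ≤ 0 := by linarith
  exact add_le_of_nonpos_right (mul_nonpos_of_nonpos_of_nonneg half_nonpos (sq_nonneg _))

theorem acceleration_neg_of_velocity_neg (hv : 0 ≤ v) (ht : 0 ≤ t) (hvt : v + c * t < 0) :
    c < 0 :=
  neg_of_mul_neg_left (by linarith) ht

theorem stoppingTime_mem_Icc (hv : 0 ≤ v) (hc : c < 0) (hvt : v + c * t ≤ 0) :
    -(v / c) ∈ Icc 0 t := by
  constructor
  · exact neg_nonneg.2 (div_nonpos_of_nonneg_of_nonpos hv hc.le)
  · rw [← div_neg, div_le_iff₀ (neg_pos.2 hc)]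
    linarith

theorem isGreatest_clampPos (x : ℝ) (hv : 0 ≤ v) (ht : 0 ≤ t) :
    IsGreatest (freePos x v c '' Icc 0 t) (clampPos x v c t) := by
  rcases le_or_gt 0 (v + c * t) with hvt | hvt
  · rw [clampPos, if_pos hvt]
    refine ⟨mem_image_of_mem _ (right_mem_Icc.2 ht), forall_mem_image.2 fun s hs ↦ ?_⟩
    exact freePos_le_freePos_of_velocity_nonneg hs.2 (velocity_nonneg_of_mem_Icc hv hvt hs) hvt
  · have hc : c < 0 := acceleration_neg_of_velocity_neg hv ht hvt
    rw [clampPos, if_neg hvt.not_ge]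
    exact ⟨⟨-(v / c), stoppingTime_mem_Icc hv hc hvt.le, freePos_stoppingTime hc.ne⟩,
      forall_mem_image.2 fun s _ ↦ freePos_le_of_acceleration_neg hc⟩

end

theorem front_car_worst_case_general (x : ℝ) {v t : ℝ} (hv : 0 ≤ v) (ht : 0 ≤ t) :
    Monotone fun c ↦ clampPos x v c t := by
  intro c d hcd
  obtain ⟨s, hs, hmax⟩ := (isGreatest_clampPos (c := c) x hv ht).1
  calc
    clampPos x v c t = freePos x v c s := hmax.symm
    _ ≤ freePos x v d s := monotone_freePos_acceleration x v s hcd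
    _ ≤ clampPos x v d t := (isGreatest_clampPos x hv ht).2 (mem_image_of_mem _ hs)

/-- Monotonicity of reach: braking at maximum force `B_max` is the worst case
(minimal position) for the front car. -/
theorem front_car_worst_case (x v a Bmax t : ℝ)
    (hBmax : Bmax < 0) (ha : a ≥ Bmax) (hv : 0 ≤ v) (ht : 0 ≤ t) :
    clampPos x v Bmax t ≤ clampPos x v a t :=
  front_car_worst_case_general x hv ht ha
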